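/- For the sequences generated by Algorithm 1, for every i ∈ I one has lim_{n→∞} ‖x_n − z_n^{(i)}‖ = 0 and lim_{n→∞} ‖T_i(x_n) − x_n‖ = 0. -/

import Mathlib

open Filter Topology

/-! Every stage composes maps that are nonexpansive up to small errors: by the Baillon–Haddad
theorem a gradient step of length at most `2 L` is nonexpansive, and so are the proximal step and
`T i`.

* Comparing two consecutive cycles, the displacement of the iterates shrinks by the factor
  `1 - α (n + 1)` up to errors `o(α (n + 1))`; since `∑ α = ∞`, Xu's lemma gives
  `x (n + 1) - x n → 0`. Proximal points with different step sizes are compared through the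
  resolvent identity.
* Comparing with a common fixed point `p`, each stage decreases the squared distance to `p` by
  `‖z - y‖ ^ 2 + ‖y - T y‖ ^ 2` up to a vanishing error. Over a cycle the total decrease is
  `‖x n - p‖ ^ 2 - ‖x (n + 1) - p‖ ^ 2 → 0`, so every one of these terms vanishes.

Hence consecutive points within a cycle get arbitrarily close to each other. -/

open Asymptotics
open scoped InnerProductSpace

section RealSequences

theorem isLittleO_of_tendsto_one_div_mul_abs {ι : Type*} {l : Filter ι} {a b : ι → ℝ}
    (hb : ∀ n, 0 < b n) (h : Tendsto (fun n ↦ 1 / b n * |a n|) l (𝓝 0)) : a =o[l] b := by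
  refine (isLittleO_of_tendsto (fun n hn ↦ absurd hn (hb n).ne') ?_).of_norm_left
  simpa only [one_div_mul_eq_div, Real.norm_eq_abs] using h

theorem tendsto_zero_of_le_one_sub_mul {a c : ℕ → ℝ} (ha : ∀ n, 0 ≤ a n) (hsum : ¬ Summable a)
    (hc : ∀ n, 0 ≤ c n) (hrec : ∀ᶠ n in atTop, c (n + 1) ≤ (1 - a n) * c n) :
    Tendsto c atTop (𝓝 0) := by
  obtain ⟨N, hN⟩ := eventually_atTop.1 hrec
  let s : ℕ → ℝ := fun n ↦ ∑ j ∈ Finset.range n, a j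
  have hs : Tendsto s atTop atTop := (not_summable_iff_tendsto_nat_atTop_of_nonneg ha).1 hsum
  have hbound : ∀ n ≥ N, c n ≤ Real.exp (-s n) * (Real.exp (s N) * c N) := by
    intro n hn
    induction n, hn using Nat.le_induction with
    | base => rw [← mul_assoc, ← Real.exp_add, neg_add_cancel, Real.exp_zero, one_mul]
    | succ n hn ih =>
      calc c (n + 1) ≤ (1 - a n) * c n := hN n hn
        _ ≤ Real.exp (-a n) * c n :=
          mul_le_mul_of_nonneg_right (Real.one_sub_le_exp_neg _) (hc n)
        _ ≤ Real.exp (-a n) * (Real.exp (-s n) * (Real.exp (s N) * c N)) := by gcongr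
        _ = Real.exp (-s (n + 1)) * (Real.exp (s N) * c N) := by
          rw [← mul_assoc, ← Real.exp_add, ← neg_add_rev, ← Finset.sum_range_succ]
  refine squeeze_zero' (.of_forall hc) (eventually_atTop.2 ⟨N, hbound⟩) ?_
  simpa using (Real.tendsto_exp_neg_atTop_nhds_zero.comp hs).mul_const (Real.exp (s N) * c N)

/-- Xu's lemma: above any level `ε`, the perturbation `r` is absorbed by the contraction. -/
theorem tendsto_zero_of_le_one_sub_mul_add_isLittleO {a b r : ℕ → ℝ}
    (ha : ∀ n, a n ∈ Set.Icc 0 1) (hsum : ¬ Summable a) (hb : ∀ n, 0 ≤ b n)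
    (hr : r =o[atTop] a) (hrec : ∀ᶠ n in atTop, b (n + 1) ≤ (1 - a n) * b n + r n) :
    Tendsto b atTop (𝓝 0) := by
  have hexcess : ∀ ε > 0, Tendsto (fun n ↦ max (b n - ε) 0) atTop (𝓝 0) := by
    intro ε hε
    refine tendsto_zero_of_le_one_sub_mul (fun n ↦ (ha n).1) hsum (fun n ↦ le_max_right _ _) ?_
    filter_upwards [hrec, hr.bound hε] with n hn hrn
    have ha' : 0 ≤ 1 - a n := sub_nonneg.2 (ha n).2
    have hr' : r n ≤ ε * a n := by
      rw [Real.norm_of_nonneg (ha n).1] at hrn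
      exact (Real.le_norm_self _).trans hrn
    refine max_le ?_ (mul_nonneg ha' (le_max_right _ _))
    calc b (n + 1) - ε ≤ (1 - a n) * (b n - ε) := by linarith
      _ ≤ (1 - a n) * max (b n - ε) 0 := by gcongr; exact le_max_left _ _
  refine tendsto_order.2 ⟨fun c hc ↦ .of_forall fun n ↦ hc.trans_le (hb n), fun ε hε ↦ ?_⟩
  filter_upwards [(hexcess (ε / 2) (half_pos hε)).eventually_lt_const (half_pos hε)] with n hn
  linarith [le_max_left (b n - ε / 2) 0]

theorem tendsto_zero_of_cyclic_decrease {M : ℕ} {V q : ℕ → ℕ → ℝ} (hq : ∀ n i, 0 ≤ q n i)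
    (hstep : ∀ i ∈ Finset.Icc 1 M, ∃ e : ℕ → ℝ, Tendsto e atTop (𝓝 0) ∧
      ∀ᶠ n in atTop, V n (i + 1) + q n i ≤ V n i + e n)
    (hV : Tendsto (fun n ↦ V n 1 - V n (M + 1)) atTop (𝓝 0)) {i : ℕ} (hi : i ∈ Finset.Icc 1 M) :
    Tendsto (fun n ↦ q n i) atTop (𝓝 0) := by
  choose! e he hle using hstep
  have hlim : Tendsto (fun n ↦ V n 1 - V n (M + 1) + ∑ j ∈ Finset.Icc 1 M, e j n) atTop (𝓝 0) := by
    simpa using hV.add (tendsto_finsetSum _ he)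
  refine squeeze_zero' (.of_forall fun n ↦ hq n i) ?_ hlim
  filter_upwards [(Finset.eventually_all _).2 hle] with n hn
  have htelescope : ∑ j ∈ Finset.Icc 1 M, (V n (j + 1) - V n j) = V n (M + 1) - V n 1 := by
    rw [← Finset.Ico_add_one_right_eq_Icc, Finset.sum_Ico_sub _ (by omega)]
  calc q n i ≤ ∑ j ∈ Finset.Icc 1 M, q n j := Finset.single_le_sum (fun j _ ↦ hq n j) hi
    _ ≤ ∑ j ∈ Finset.Icc 1 M, (e j n - (V n (j + 1) - V n j)) :=
      Finset.sum_le_sum fun j hj ↦ by linarith [hn j hj]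
    _ = V n 1 - V n (M + 1) + ∑ j ∈ Finset.Icc 1 M, e j n := by
      rw [Finset.sum_sub_distrib, htelescope]; ring

end RealSequences

section NormedSequences

variable {ι E F : Type*} [SeminormedAddCommGroup E] [SeminormedAddCommGroup F] {l : Filter ι}

theorem isBigO_one_comp_of_norm_sub_le {g : E → F} {K : ℝ} {v : ι → E}
    (hg : ∀ x y, ‖g x - g y‖ ≤ K * ‖x - y‖) (hv : v =O[l] fun _ ↦ (1 : ℝ)) :
    (fun n ↦ g (v n)) =O[l] fun _ ↦ (1 : ℝ) := by
  have hdiff : (fun n ↦ g (v n) - g 0) =O[l] v :=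
    .of_bound K (.of_forall fun n ↦ by simpa using hg (v n) 0)
  simpa using (hdiff.trans hv).add (isBigO_const_const (g 0) one_ne_zero l)

theorem tendsto_norm_sq_sub_norm_sq {v w : ι → E} (hv : v =O[l] fun _ ↦ (1 : ℝ))
    (hw : w =O[l] fun _ ↦ (1 : ℝ)) (hvw : Tendsto (fun n ↦ v n - w n) l (𝓝 0)) :
    Tendsto (fun n ↦ ‖v n‖ ^ 2 - ‖w n‖ ^ 2) l (𝓝 0) := by
  have hsum : (fun n ↦ ‖v n‖ + ‖w n‖) =O[l] fun _ ↦ (1 : ℝ) := hv.norm_left.add hw.norm_left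
  have hdiff : (fun n ↦ ‖v n‖ - ‖w n‖) =o[l] fun _ ↦ (1 : ℝ) :=
    (isLittleO_one_iff ℝ).2 (squeeze_zero_norm (fun n ↦ abs_norm_sub_norm_le _ _)
      (tendsto_zero_iff_norm_tendsto_zero.1 hvw))
  refine (isLittleO_one_iff ℝ).1 ((hsum.mul_isLittleO hdiff).congr (fun n ↦ ?_) fun _ ↦ one_mul 1)
  ring

theorem tendsto_zero_of_norm_sq_le {v : ι → E} {c : ι → ℝ} (hc : Tendsto c l (𝓝 0))
    (hv : ∀ n, ‖v n‖ ^ 2 ≤ c n) : Tendsto v l (𝓝 0) :=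
  squeeze_zero_norm (fun n ↦ Real.le_sqrt_of_sq_le (hv n)) (by simpa using hc.sqrt)

theorem isBigO_one_of_norm_le {v : ℕ → E} (hv : ∃ C, ∀ n ≥ 1, ‖v n‖ ≤ C) :
    v =O[atTop] fun _ ↦ (1 : ℝ) := by
  obtain ⟨C, hC⟩ := hv
  exact .of_bound C ((eventually_ge_atTop 1).mono fun n hn ↦ by simpa using hC n hn)

theorem isBigO_one_sub_pred {w : ℕ → E} (hw : w =O[atTop] fun _ ↦ (1 : ℝ)) :
    (fun n ↦ w n - w (n - 1)) =O[atTop] fun _ ↦ (1 : ℝ) :=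
  hw.sub (hw.comp_tendsto (tendsto_sub_atTop_nat 1))

theorem isBigO_one_of_cycle {M : ℕ} {w : ℕ → ℕ → E}
    (hcycle : ∀ n ≥ 1, w (n + 1) 1 = w n (M + 1))
    (hw : ∀ i ∈ Finset.Icc 1 M, (fun n ↦ w n (i + 1)) =O[atTop] fun _ ↦ (1 : ℝ)) {i : ℕ}
    (hi : i ∈ Finset.Icc 1 M) : (fun n ↦ w n i) =O[atTop] fun _ ↦ (1 : ℝ) := by
  obtain ⟨hi1, hiM⟩ := Finset.mem_Icc.1 hi
  obtain rfl | ⟨k, hk, rfl⟩ : i = 1 ∨ ∃ k, 1 ≤ k ∧ i = k + 1 := by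
    rcases hi1.eq_or_lt with h | h
    · exact .inl h.symm
    · exact .inr ⟨i - 1, by omega, by omega⟩
  · refine ((hw M (Finset.mem_Icc.2 ⟨hiM, le_rfl⟩)).comp_tendsto
      (tendsto_sub_atTop_nat 1)).congr' ?_ .rfl
    filter_upwards [eventually_ge_atTop 2] with n hn
    rw [Function.comp_apply, ← hcycle (n - 1) (by omega), Nat.sub_add_cancel (by omega)]
  · exact hw k (Finset.mem_Icc.2 ⟨hk, by omega⟩)

theorem tendsto_sub_of_cycle {M : ℕ} {w : ℕ → ℕ → E}
    (hstep : ∀ i ∈ Finset.Icc 1 M, Tendsto (fun n ↦ w n i - w n (i + 1)) atTop (𝓝 0)) {i : ℕ}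
    (hi : i ∈ Finset.Icc 1 M) : Tendsto (fun n ↦ w n 1 - w n i) atTop (𝓝 0) := by
  obtain ⟨hi1, hiM⟩ := Finset.mem_Icc.1 hi
  have htelescope : ∀ n, ∑ j ∈ Finset.Ico 1 i, (w n j - w n (j + 1)) = w n 1 - w n i := fun n ↦ by
    rw [← neg_sub, ← Finset.sum_Ico_sub _ hi1, ← Finset.sum_neg_distrib]
    simp only [neg_sub]
  have hsum := tendsto_finsetSum (Finset.Ico 1 i) fun j hj ↦
    hstep j (Finset.mem_Icc.2 (by rw [Finset.mem_Ico] at hj; omega))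
  simpa only [htelescope, Finset.sum_const_zero] using hsum

theorem tendsto_cycle_displacement {M : ℕ} (hM : 1 ≤ M) {α : ℕ → ℝ} {w : ℕ → ℕ → E}
    (hα : ∀ n, α n ∈ Set.Icc 0 1) (hsum : ¬ Summable α)
    (hcycle : ∀ n ≥ 1, w (n + 1) 1 = w n (M + 1))
    (hstep : ∀ i ∈ Finset.Icc 1 M, ∃ r : ℕ → ℝ, r =o[atTop] (fun n ↦ α (n + 1)) ∧
      ∀ᶠ n in atTop, ‖w (n + 1) (i + 1) - w n (i + 1)‖ ≤
        (1 - α (n + 1)) * ‖w (n + 1) i - w n i‖ + r n) :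
    Tendsto (fun n ↦ w (n + 1) 1 - w n 1) atTop (𝓝 0) := by
  have hstages : ∀ k, 1 ≤ k → k ≤ M → ∃ r : ℕ → ℝ, r =o[atTop] (fun n ↦ α (n + 1)) ∧
      ∀ᶠ n in atTop, ‖w (n + 1) (k + 1) - w n (k + 1)‖ ≤
        (1 - α (n + 1)) * ‖w (n + 1) 1 - w n 1‖ + r n := by
    intro k hk
    induction k, hk using Nat.le_induction with
    | base => exact fun h1M ↦ hstep 1 (Finset.mem_Icc.2 ⟨le_rfl, h1M⟩)
    | succ k hk ih =>
      intro hkM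
      obtain ⟨r, hr, hle⟩ := ih (by omega)
      obtain ⟨r', hr', hle'⟩ := hstep (k + 1) (Finset.mem_Icc.2 ⟨by omega, hkM⟩)
      refine ⟨fun n ↦ r n + r' n, hr.add hr', ?_⟩
      filter_upwards [hle, hle'] with n hn hn'
      have := mul_le_of_le_one_left (norm_nonneg (w (n + 1) (k + 1) - w n (k + 1)))
        (sub_le_self 1 (hα (n + 1)).1)
      linarith
  obtain ⟨r, hr, hle⟩ := hstages M hM le_rfl
  refine tendsto_zero_iff_norm_tendsto_zero.2 (tendsto_zero_of_le_one_sub_mul_add_isLittleO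
    (fun n ↦ hα (n + 1)) (mt (summable_nat_add_iff 1).1 hsum) (fun n ↦ norm_nonneg _) hr ?_)
  filter_upwards [hle, eventually_ge_atTop 1] with n hn hn1
  rwa [← hcycle n hn1, ← hcycle (n + 1) (by omega)] at hn

variable [NormedSpace ℝ E]

theorem isLittleO_smul_of_isBigO_one {k a : ι → ℝ} {v : ι → E} (hk : k =o[l] a)
    (hv : v =O[l] fun _ ↦ (1 : ℝ)) : (fun n ↦ k n • v n) =o[l] a := by
  simpa using hk.smul_isBigO hv

theorem tendsto_zero_smul_of_isBigO_one {k : ι → ℝ} {v : ι → E} (hk : Tendsto k l (𝓝 0))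
    (hv : v =O[l] fun _ ↦ (1 : ℝ)) : Tendsto (fun n ↦ k n • v n) l (𝓝 0) :=
  (isLittleO_one_iff ℝ).1 (isLittleO_smul_of_isBigO_one ((isLittleO_one_iff ℝ).2 hk) hv)

theorem isBigO_one_of_succ_eq_add_smul {β : ℕ → ℝ} {v d : ℕ → E}
    (hv : v =O[atTop] fun _ ↦ (1 : ℝ)) (hβ : Tendsto β atTop (𝓝 0))
    (hd : ∀ᶠ n in atTop, d (n + 1) = v n + β n • d n) : d =O[atTop] fun _ ↦ (1 : ℝ) := by
  obtain ⟨C, hC⟩ := hv.bound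
  have hβ' : ∀ᶠ n in atTop, ‖β n‖ ≤ 1 / 2 :=
    (tendsto_zero_iff_norm_tendsto_zero.1 hβ).eventually_le_const (by norm_num)
  obtain ⟨N, hN⟩ := eventually_atTop.1 (hC.and (hβ'.and hd))
  refine .of_bound (max ‖d N‖ (2 * C)) (eventually_atTop.2 ⟨N, fun n hn ↦ ?_⟩)
  rw [norm_one, mul_one]
  induction n, hn using Nat.le_induction with
  | base => exact le_max_left _ _
  | succ n hn ih =>
    obtain ⟨hvn, hβn, hdn⟩ := hN n hn
    rw [norm_one, mul_one] at hvn
    calc ‖d (n + 1)‖ ≤ ‖v n‖ + ‖β n‖ * ‖d n‖ := by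
          rw [hdn, ← norm_smul]; exact norm_add_le _ _
      _ ≤ C + 1 / 2 * max ‖d N‖ (2 * C) := by gcongr
      _ ≤ max ‖d N‖ (2 * C) := by linarith [le_max_right ‖d N‖ (2 * C)]

theorem norm_smul_add_smul_sub_sq_le {a : ℝ} (ha : a ∈ Set.Icc 0 1) (u v p : E) :
    ‖a • u + (1 - a) • v - p‖ ^ 2 ≤ a * ‖u - p‖ ^ 2 + (1 - a) * ‖v - p‖ ^ 2 := by
  have hconv : ConvexOn ℝ Set.univ fun x : E ↦ ‖x‖ ^ 2 :=
    (convexOn_norm convex_univ).pow (fun _ _ ↦ norm_nonneg _) 2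
  rw [show a • u + (1 - a) • v - p = a • (u - p) + (1 - a) • (v - p) by module]
  exact hconv.2 (Set.mem_univ _) (Set.mem_univ _) ha.1 (sub_nonneg.2 ha.2) (by ring)

end NormedSequences

section Operators

variable {H : Type*} [NormedAddCommGroup H]

/-- `y` is a proximal point `prox_{l f}(a)`, that is, a minimizer of the function
`f + (1 / (2 * l)) * ‖a - ·‖ ^ 2`. Existence and uniqueness of the minimizer are not part of the
definition. -/
def IsProx (f : H → ℝ) (l : ℝ) (a y : H) : Prop :=
  ∀ v, f y + (1 / (2 * l)) * ‖a - y‖ ^ 2 ≤ f v + (1 / (2 * l)) * ‖a - v‖ ^ 2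

theorem IsProx.sub_mul_norm_sq_le {f : H → ℝ} {l : ℝ} {a y : H} (hl : 0 ≤ l)
    (hy : IsProx f l a y) (v : H) :
    f y - 1 / (2 * l) * ‖a - v‖ ^ 2 ≤ f v := by
  have hmin := hy v
  have : 0 ≤ 1 / (2 * l) * ‖a - y‖ ^ 2 := by positivity
  linarith

variable [InnerProductSpace ℝ H]

/-- Firm nonexpansiveness, in the inner product form used to define the maps `T i`. -/
def IsFirmlyNonexpansive (T : H → H) : Prop :=
  ∀ x y, ‖T x - T y‖ ^ 2 ≤ ⟪T x - T y, x - y⟫_ℝ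

/-- Cocoercivity with modulus `L`, which abstracts the gradients `∇ h i`. -/
def IsCocoercive (L : ℝ) (g : H → H) : Prop :=
  ∀ x y, L * ‖g x - g y‖ ^ 2 ≤ ⟪g x - g y, x - y⟫_ℝ

namespace IsFirmlyNonexpansive

variable {T : H → H}

theorem norm_sub_le (hT : IsFirmlyNonexpansive T) (x y : H) : ‖T x - T y‖ ≤ ‖x - y‖ := by
  rcases (norm_nonneg (T x - T y)).eq_or_lt with hzero | hpos
  · exact hzero ▸ norm_nonneg _
  · refine le_of_mul_le_mul_left ?_ hpos
    calc ‖T x - T y‖ * ‖T x - T y‖ ≤ ⟪T x - T y, x - y⟫_ℝ := by rw [← sq]; exact hT x y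
      _ ≤ ‖T x - T y‖ * ‖x - y‖ := real_inner_le_norm _ _

theorem norm_apply_sub_le (hT : IsFirmlyNonexpansive T) (x y : H) :
    ‖T x - x‖ ≤ 2 * ‖x - y‖ + ‖y - T y‖ := by
  calc ‖T x - x‖ ≤ ‖T x - T y‖ + ‖T y - y‖ + ‖y - x‖ := by
        simpa using norm_add₃_le (a := T x - T y) (b := T y - y) (c := y - x)
    _ ≤ 2 * ‖x - y‖ + ‖y - T y‖ := by
        rw [norm_sub_rev (T y) y, norm_sub_rev y x]
        linarith [hT.norm_sub_le x y]

theorem norm_sub_sq_add_le (hT : IsFirmlyNonexpansive T) {p : H} (hp : T p = p) (y : H) :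
    ‖T y - p‖ ^ 2 + ‖y - T y‖ ^ 2 ≤ ‖y - p‖ ^ 2 := by
  have hfirm := hT y p
  rw [hp, real_inner_comm] at hfirm
  have hexpand := norm_sub_sq_real (y - p) (T y - p)
  rw [sub_sub_sub_cancel_right] at hexpand
  linarith

theorem isBigO_one_comp (hT : IsFirmlyNonexpansive T) {ι : Type*} {l : Filter ι} {y : ι → H}
    (hy : y =O[l] fun _ ↦ (1 : ℝ)) : (fun n ↦ T (y n)) =O[l] fun _ ↦ (1 : ℝ) :=
  isBigO_one_comp_of_norm_sub_le (K := 1) (by simpa using hT.norm_sub_le) hy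

end IsFirmlyNonexpansive

namespace IsCocoercive

variable {L : ℝ} {g : H → H}

theorem norm_sub_le (hg : IsCocoercive L g) (hL : 0 < L) (x y : H) :
    ‖g x - g y‖ ≤ L⁻¹ * ‖x - y‖ := by
  rw [← div_eq_inv_mul, le_div_iff₀' hL]
  rcases (norm_nonneg (g x - g y)).eq_or_lt with hzero | hpos
  · rw [← hzero, mul_zero]; exact norm_nonneg _
  · refine le_of_mul_le_mul_left ?_ hpos
    calc ‖g x - g y‖ * (L * ‖g x - g y‖) = L * ‖g x - g y‖ ^ 2 := by ring
      _ ≤ ⟪g x - g y, x - y⟫_ℝ := hg x y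
      _ ≤ ‖g x - g y‖ * ‖x - y‖ := real_inner_le_norm _ _

theorem norm_sub_sub_smul_le (hg : IsCocoercive L g) {l : ℝ} (hl : 0 ≤ l) (hlL : l ≤ 2 * L)
    (x y : H) : ‖(x - y) - l • (g x - g y)‖ ≤ ‖x - y‖ := by
  refine le_of_sq_le_sq ?_ (norm_nonneg _)
  calc ‖(x - y) - l • (g x - g y)‖ ^ 2
      = ‖x - y‖ ^ 2 - 2 * l * ⟪g x - g y, x - y⟫_ℝ + l * (l * ‖g x - g y‖ ^ 2) := by
        rw [norm_sub_sq_real, real_inner_smul_right, norm_smul, mul_pow, Real.norm_eq_abs, sq_abs,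
          real_inner_comm]
        ring
    _ ≤ ‖x - y‖ ^ 2 - 2 * l * (L * ‖g x - g y‖ ^ 2) + l * (2 * L * ‖g x - g y‖ ^ 2) := by
        gcongr
        exact hg x y
    _ = ‖x - y‖ ^ 2 := by ring

end IsCocoercive

namespace IsProx

variable {f : H → ℝ} {l l' : ℝ} {a a' y y' z d : H}

theorem inner_le (hf : ConvexOn ℝ Set.univ f) (hl : 0 < l) (hy : IsProx f l a y) (v : H) :
    ⟪a - y, v - y⟫_ℝ ≤ l * (f v - f y) := by
  have hsegment : ∀ t ∈ Set.Ioc (0 : ℝ) 1,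
      ⟪a - y, v - y⟫_ℝ ≤ l * (f v - f y) + t * (‖v - y‖ ^ 2 / 2) := by
    rintro t ⟨ht, ht1⟩
    have hconv : f (y + t • (v - y)) ≤ (1 - t) * f y + t * f v := by
      have h := hf.2 (Set.mem_univ y) (Set.mem_univ v) (sub_nonneg.2 ht1) ht.le (by ring)
      rwa [show (1 - t) • y + t • v = y + t • (v - y) by module] at h
    have hmin := hy (y + t • (v - y))
    rw [← sub_sub, norm_sub_sq_real (a - y), real_inner_smul_right, norm_smul, mul_pow,
      Real.norm_of_nonneg ht.le] at hmin
    have hscaled : 0 ≤ t / l *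
        (l * (f v - f y) + t * (‖v - y‖ ^ 2 / 2) - ⟪a - y, v - y⟫_ℝ) := by
      have hexpand : t / l * (l * (f v - f y) + t * (‖v - y‖ ^ 2 / 2) - ⟪a - y, v - y⟫_ℝ) =
          t * (f v - f y) +
            1 / (2 * l) * (t ^ 2 * ‖v - y‖ ^ 2 - 2 * (t * ⟪a - y, v - y⟫_ℝ)) := by
        field_simp
        ring
      linarith
    exact sub_nonneg.1 (nonneg_of_mul_nonneg_right hscaled (div_pos ht hl))
  have hlim : Tendsto (fun t : ℝ ↦ l * (f v - f y) + t * (‖v - y‖ ^ 2 / 2)) (𝓝[>] 0)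
      (𝓝 (l * (f v - f y))) :=
    tendsto_nhdsWithin_of_tendsto_nhds (Continuous.tendsto' (by fun_prop) _ _ (by simp))
  exact ge_of_tendsto hlim
    (eventually_of_mem (Ioc_mem_nhdsGT one_pos) hsegment)

theorem of_inner_le (hl : 0 < l) (h : ∀ v, ⟪a - y, v - y⟫_ℝ ≤ l * (f v - f y)) :
    IsProx f l a y := by
  intro v
  have hexpand : ‖a - v‖ ^ 2 = ‖a - y‖ ^ 2 - 2 * ⟪a - y, v - y⟫_ℝ + ‖v - y‖ ^ 2 := by
    rw [← norm_sub_sq_real, sub_sub_sub_cancel_right]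
  have hgap : f v + 1 / (2 * l) * ‖a - v‖ ^ 2 - (f y + 1 / (2 * l) * ‖a - y‖ ^ 2) =
      1 / l * (l * (f v - f y) - ⟪a - y, v - y⟫_ℝ) + 1 / (2 * l) * ‖v - y‖ ^ 2 := by
    rw [hexpand]
    field_simp
    ring
  have hnonneg := mul_nonneg (one_div_pos.2 hl).le (sub_nonneg.2 (h v))
  have : 0 ≤ 1 / (2 * l) * ‖v - y‖ ^ 2 := by positivity
  linarith

theorem rescale (hf : ConvexOn ℝ Set.univ f) (hl : 0 < l) (hl' : 0 < l') (hy : IsProx f l a y) :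
    IsProx f l' (y + (l' / l) • (a - y)) y := by
  refine of_inner_le hl' fun v ↦ ?_
  calc ⟪y + (l' / l) • (a - y) - y, v - y⟫_ℝ = l' / l * ⟪a - y, v - y⟫_ℝ := by
        rw [add_sub_cancel_left, real_inner_smul_left]
    _ ≤ l' / l * (l * (f v - f y)) := by gcongr; exact hy.inner_le hf hl v
    _ = l' * (f v - f y) := by field_simp

theorem norm_sub_le (hf : ConvexOn ℝ Set.univ f) (hl : 0 < l) (hy : IsProx f l a y)
    (hy' : IsProx f l a' y') : ‖y' - y‖ ≤ ‖a' - a‖ := by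
  have hfirm : ‖y' - y‖ * ‖y' - y‖ ≤ ‖y' - y‖ * ‖a' - a‖ := by
    calc ‖y' - y‖ * ‖y' - y‖
        = ⟪y' - y, a' - a⟫_ℝ + (⟪a - y, y' - y⟫_ℝ + ⟪a' - y', y - y'⟫_ℝ) := by
          rw [← real_inner_self_eq_norm_mul_norm]
          simp only [inner_sub_left, inner_sub_right, real_inner_comm]
          ring
      _ ≤ ⟪y' - y, a' - a⟫_ℝ + (l * (f y' - f y) + l * (f y - f y')) := by
          gcongr
          exacts [hy.inner_le hf hl y', hy'.inner_le hf hl y]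
      _ = ⟪y' - y, a' - a⟫_ℝ := by ring
      _ ≤ ‖y' - y‖ * ‖a' - a‖ := real_inner_le_norm _ _
  rcases (norm_nonneg (y' - y)).eq_or_lt with hzero | hpos
  · exact hzero ▸ norm_nonneg _
  · exact le_of_mul_le_mul_left hfirm hpos

theorem norm_sub_le_of_add_smul {z' d' : H} (hf : ConvexOn ℝ Set.univ f) (hl : 0 < l)
    (hl' : 0 < l') (hy : IsProx f l (z + l • d) y) (hy' : IsProx f l' (z' + l' • d') y') :
    ‖y' - y‖ ≤ ‖(z' - z) + l' • (d' - d)‖ + ‖(1 - l' / l) • (z - y)‖ := by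
  calc ‖y' - y‖ ≤ ‖z' + l' • d' - (y + (l' / l) • (z + l • d - y))‖ :=
        (hy.rescale hf hl hl').norm_sub_le hf hl' hy'
    _ = ‖((z' - z) + l' • (d' - d)) + (1 - l' / l) • (z - y)‖ := by
        have hscale : (l' / l) • l • d = l' • d := by rw [smul_smul, div_mul_cancel₀ _ hl.ne']
        rw [add_sub_right_comm z, smul_add, hscale]
        congr 1
        module
    _ ≤ _ := norm_add_le _ _

theorem norm_sub_sq_le (hf : ConvexOn ℝ Set.univ f) (hl : 0 < l) (hy : IsProx f l (z + l • d) y)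
    (p : H) :
    ‖y - p‖ ^ 2 ≤ ‖z - p‖ ^ 2 - ‖z - y‖ ^ 2 + 2 * l * (f p - f y + ⟪d, y - p⟫_ℝ) := by
  have hinner := hy.inner_le hf hl p
  rw [add_sub_right_comm, inner_add_left, real_inner_smul_left, ← neg_sub y p, inner_neg_right,
    inner_neg_right] at hinner
  have hexpand : ‖z - p‖ ^ 2 = ‖z - y‖ ^ 2 + 2 * ⟪z - y, y - p⟫_ℝ + ‖y - p‖ ^ 2 := by
    rw [← norm_add_sq_real, sub_add_sub_cancel]
  linarith

end IsProx

end Operators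

section BaillonHaddad

variable {H : Type*} [NormedAddCommGroup H] [InnerProductSpace ℝ H] [CompleteSpace H]
  {h : H → ℝ} {g : H → H}

theorem hasDerivAt_comp_add_smul {x v b : H} {t : ℝ} (hg : HasGradientAt h b (x + t • v)) :
    HasDerivAt (fun s : ℝ ↦ h (x + s • v)) ⟪b, v⟫_ℝ t := by
  have hline : HasDerivAt (fun s : ℝ ↦ x + s • v) v t := by
    simpa using ((hasDerivAt_id t).smul_const v).const_add x
  simpa [Function.comp_def] using hg.hasFDerivAt.comp_hasDerivAt t hline

theorem add_inner_le_of_convexOn {x b : H} (hh : ConvexOn ℝ Set.univ h)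
    (hg : HasGradientAt h b x) (y : H) : h x + ⟪b, y - x⟫_ℝ ≤ h y := by
  have hline : ConvexOn ℝ Set.univ (fun t : ℝ ↦ h (x + t • (y - x))) := by
    simpa [Function.comp_def, AffineMap.lineMap_apply_module', add_comm] using
      hh.comp_affineMap (AffineMap.lineMap x y)
  have hderiv : HasDerivAt (fun t : ℝ ↦ h (x + t • (y - x))) ⟪b, y - x⟫_ℝ 0 :=
    hasDerivAt_comp_add_smul (by simpa using hg)
  have hslope := hline.le_slope_of_hasDerivAt (Set.mem_univ 0) (Set.mem_univ 1) one_pos hderiv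
  simp only [slope_def_field, one_smul, zero_smul, add_zero, sub_zero, div_one,
    add_sub_cancel] at hslope
  linarith

theorem le_add_inner_add_of_lipschitz_gradient {K : ℝ} (hg : ∀ x, HasGradientAt h (g x) x)
    (hlip : ∀ x y, ‖g x - g y‖ ≤ K * ‖x - y‖) (x v : H) :
    h (x + v) ≤ h x + ⟪g x, v⟫_ℝ + K / 2 * ‖v‖ ^ 2 := by
  let φ : ℝ → ℝ := fun t ↦ h (x + t • v) - (t * ⟪g x, v⟫_ℝ + t ^ 2 * (K / 2 * ‖v‖ ^ 2))
  have hφ : ∀ t, HasDerivAt φ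
      (⟪g (x + t • v), v⟫_ℝ - (⟪g x, v⟫_ℝ + 2 * t * (K / 2 * ‖v‖ ^ 2))) t := fun t ↦
    ((hasDerivAt_comp_add_smul (hg (x + t • v))).sub
      (((hasDerivAt_id t).mul_const ⟪g x, v⟫_ℝ).add
        ((hasDerivAt_pow 2 t).mul_const (K / 2 * ‖v‖ ^ 2)))).congr_deriv (by simp)
  have hφ_nonpos : ∀ t ∈ interior (Set.Icc (0 : ℝ) 1), deriv φ t ≤ 0 := by
    intro t ht
    rw [interior_Icc] at ht
    have hgrowth : ⟪g (x + t • v) - g x, v⟫_ℝ ≤ K * t * ‖v‖ ^ 2 := by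
      calc ⟪g (x + t • v) - g x, v⟫_ℝ ≤ ‖g (x + t • v) - g x‖ * ‖v‖ := real_inner_le_norm _ _
        _ ≤ K * ‖x + t • v - x‖ * ‖v‖ := by gcongr; exact hlip _ _
        _ = K * t * ‖v‖ ^ 2 := by
          rw [add_sub_cancel_left, norm_smul, Real.norm_of_nonneg ht.1.le]; ring
    rw [inner_sub_left] at hgrowth
    rw [(hφ t).deriv]
    linarith
  have hanti : AntitoneOn φ (Set.Icc 0 1) :=
    antitoneOn_of_deriv_nonpos (convex_Icc 0 1)
      (fun t _ ↦ (hφ t).continuousAt.continuousWithinAt)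
      (fun t _ ↦ (hφ t).differentiableAt.differentiableWithinAt) hφ_nonpos
  have hle : φ 1 ≤ φ 0 :=
    hanti (Set.left_mem_Icc.2 zero_le_one) (Set.right_mem_Icc.2 zero_le_one) zero_le_one
  simp only [φ, one_smul, zero_smul, add_zero, one_mul, one_pow, zero_mul, sub_zero, ne_eq,
    OfNat.ofNat_ne_zero, not_false_eq_true, zero_pow] at hle
  linarith

/-- The descent lemma at the minimizer `y - L • (g y - g x)` of its right-hand side, combined with
the gradient inequality at `x`, gives a quadratic improvement of the latter. -/
theorem add_inner_add_norm_sq_le_of_lipschitz_gradient {L : ℝ} (hL : 0 < L)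
    (hh : ConvexOn ℝ Set.univ h) (hg : ∀ x, HasGradientAt h (g x) x)
    (hlip : ∀ x y, ‖g x - g y‖ ≤ 1 / L * ‖x - y‖) (x y : H) :
    h x + ⟪g x, y - x⟫_ℝ + L / 2 * ‖g y - g x‖ ^ 2 ≤ h y := by
  set δ := g y - g x with hδ
  have hconv := add_inner_le_of_convexOn hh (hg x) (y + -(L • δ))
  have hdescent := le_add_inner_add_of_lipschitz_gradient hg hlip y (-(L • δ))
  rw [add_sub_right_comm, inner_add_right, inner_neg_right, real_inner_smul_right] at hconv
  rw [inner_neg_right, real_inner_smul_right, norm_neg, norm_smul, Real.norm_of_nonneg hL.le]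
    at hdescent
  have hinner : L * ⟪g y, δ⟫_ℝ - L * ⟪g x, δ⟫_ℝ = L * ‖δ‖ ^ 2 := by
    rw [← mul_sub, ← inner_sub_left, ← hδ, real_inner_self_eq_norm_sq]
  have hquad : 1 / L / 2 * (L * ‖δ‖) ^ 2 = L / 2 * ‖δ‖ ^ 2 := by field_simp
  linarith

/-- The Baillon–Haddad theorem. -/
theorem isCocoercive_of_lipschitz_gradient {L : ℝ} (hL : 0 < L) (hh : ConvexOn ℝ Set.univ h)
    (hg : ∀ x, HasGradientAt h (g x) x) (hlip : ∀ x y, ‖g x - g y‖ ≤ 1 / L * ‖x - y‖) :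
    IsCocoercive L g := by
  intro x y
  have hxy := add_inner_add_norm_sq_le_of_lipschitz_gradient hL hh hg hlip x y
  have hyx := add_inner_add_norm_sq_le_of_lipschitz_gradient hL hh hg hlip y x
  rw [← neg_sub x y, inner_neg_right, norm_sub_rev] at hxy
  rw [inner_sub_left]
  linarith

end BaillonHaddad

section Parameters

/-- The conditions on the inertial parameters `θ`, the step sizes `lam`, the momentum parameters `β`
and the anchoring weights `α` under which the algorithm is asymptotically regular. Inertia, momentum
and all variation of the parameters from one cycle to the next are negligible against `α (n + 1)`;
step sizes enter through their relative variation `1 - lam (n + 1) / lam n`. -/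
structure AdmissibleParameters (θ lam β α : ℕ → ℝ) : Prop where
  lam_pos : ∀ n, 0 < lam n
  α_mem_Icc : ∀ n, α n ∈ Set.Icc 0 1
  lam_tendsto_zero : Tendsto lam atTop (𝓝 0)
  α_tendsto_zero : Tendsto α atTop (𝓝 0)
  α_not_summable : ¬ Summable α
  θ_isLittleO : θ =o[atTop] fun n ↦ α (n + 1)
  β_isLittleO : β =o[atTop] fun n ↦ α (n + 1)
  α_sub_isLittleO : (fun n ↦ α (n + 1) - α n) =o[atTop] fun n ↦ α (n + 1)
  lam_ratio_isLittleO : (fun n ↦ 1 - lam (n + 1) / lam n) =o[atTop] fun n ↦ α (n + 1)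

namespace AdmissibleParameters

variable {θ lam β α : ℕ → ℝ}

theorem of_tendsto (hlam_pos : ∀ n, 0 < lam n) (hα : ∀ n, 0 < α n ∧ α n ≤ 1)
    (hlam : Tendsto lam atTop (𝓝 0)) (hα_lim : Tendsto α atTop (𝓝 0)) (hsum : ¬ Summable α)
    (hlam_var : Tendsto (fun n ↦ 1 / α (n + 1) * |1 / lam (n + 1) - 1 / lam n|) atTop (𝓝 0))
    (hα_var : Tendsto (fun n ↦ 1 / lam (n + 1) * |1 - α n / α (n + 1)|) atTop (𝓝 0))
    (hθ : Tendsto (fun n ↦ θ n / (α (n + 1) * lam (n + 1))) atTop (𝓝 0))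
    (hβ : Tendsto (fun n ↦ β n / α (n + 1)) atTop (𝓝 0)) :
    AdmissibleParameters θ lam β α := by
  have hlam_bdd : (fun n ↦ lam (n + 1)) =O[atTop] fun _ ↦ (1 : ℝ) :=
    (hlam.comp (tendsto_add_atTop_nat 1)).isBigO_one ℝ
  have hα_mul : (fun n ↦ α (n + 1) * lam (n + 1)) =O[atTop] fun n ↦ α (n + 1) := by
    simpa using (isBigO_refl (fun n ↦ α (n + 1)) atTop).mul hlam_bdd
  have hθ_little : θ =o[atTop] fun n ↦ α (n + 1) * lam (n + 1) :=
    isLittleO_of_tendsto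
      (fun n hn ↦ absurd hn (mul_pos (hα (n + 1)).1 (hlam_pos (n + 1))).ne') hθ
  have hβ_little : β =o[atTop] fun n ↦ α (n + 1) :=
    isLittleO_of_tendsto (fun n hn ↦ absurd hn (hα (n + 1)).1.ne') hβ
  have hα_little : (fun n ↦ α (n + 1) - α n) =o[atTop] fun n ↦ α (n + 1) * lam (n + 1) :=
    ((isBigO_refl (fun n ↦ α (n + 1)) atTop).mul_isLittleO
      (isLittleO_of_tendsto_one_div_mul_abs (fun n ↦ hlam_pos (n + 1)) hα_var)).congr_left
      fun n ↦ by rw [mul_one_sub, mul_div_cancel₀ _ (hα (n + 1)).1.ne']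
  have hlam_little : (fun n ↦ 1 - lam (n + 1) / lam n) =o[atTop] fun n ↦ α (n + 1) :=
    (hlam_bdd.mul_isLittleO
      (isLittleO_of_tendsto_one_div_mul_abs (fun n ↦ (hα (n + 1)).1) hlam_var)).congr
      (fun n ↦ by rw [mul_sub, mul_one_div_cancel (hlam_pos (n + 1)).ne', mul_one_div])
      fun _ ↦ one_mul _
  exact ⟨hlam_pos, fun n ↦ ⟨(hα n).1.le, (hα n).2⟩, hlam, hα_lim, hsum,
    hθ_little.trans_isBigO hα_mul, hβ_little, hα_little.trans_isBigO hα_mul, hlam_little⟩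

theorem tendsto_zero_of_isLittleO (hP : AdmissibleParameters θ lam β α) {ε : ℕ → ℝ}
    (hε : ε =o[atTop] fun n ↦ α (n + 1)) :
    Tendsto ε atTop (𝓝 0) :=
  hε.isBigO.trans_tendsto (hP.α_tendsto_zero.comp (tendsto_add_atTop_nat 1))

theorem isLittleO_succ (hP : AdmissibleParameters θ lam β α) {ε : ℕ → ℝ}
    (hε : ε =o[atTop] fun n ↦ α (n + 1)) :
    (fun n ↦ ε (n + 1)) =o[atTop] fun n ↦ α (n + 1) := by
  have hequiv : α ~[atTop] fun n ↦ α (n + 1) :=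
    hP.α_sub_isLittleO.neg_left.congr_left fun n ↦ neg_sub _ _
  exact (hε.trans_isBigO hequiv.isBigO_symm).comp_tendsto (tendsto_add_atTop_nat 1)

end AdmissibleParameters

end Parameters

section Stage

variable {H : Type*} [NormedAddCommGroup H] [InnerProductSpace ℝ H]

/-- One stage of the algorithm, followed through all cycles `n ≥ 1`: the points `w n` entering the
stage are extrapolated to `z n`, moved along the momentum direction `d (n + 1)`, sent to the
proximal point `y n`, and the stage returns `w' n`, a combination of `T (y n)` and the anchor `u`.
The stage index `i` of the paper is suppressed, and `g` stands for `∇ h i`. -/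
structure IsProxStage (f : H → ℝ) (g T : H → H) (u : H) (θ lam β α : ℕ → ℝ)
    (w z d y w' : ℕ → H) : Prop where
  extrapolation : ∀ n ≥ 1, z n = w n + θ n • (w n - w (n - 1))
  direction : ∀ n ≥ 1, d (n + 1) = -g (z n) + β n • d n
  isProx : ∀ n ≥ 1, IsProx f (lam n) (z n + lam n • d (n + 1)) (y n)
  anchoring : ∀ n ≥ 1, w' n = α n • u + (1 - α n) • T (y n)

namespace IsProxStage

variable {f : H → ℝ} {g T : H → H} {u p : H} {θ lam β α : ℕ → ℝ} {w z d y w' : ℕ → H} {L : ℝ}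

theorem tendsto_extrapolation_sub (hs : IsProxStage f g T u θ lam β α w z d y w')
    (hθ : Tendsto θ atTop (𝓝 0)) (hw : w =O[atTop] fun _ ↦ (1 : ℝ)) :
    Tendsto (fun n ↦ z n - w n) atTop (𝓝 0) := by
  refine (tendsto_zero_smul_of_isBigO_one hθ (isBigO_one_sub_pred hw)).congr' ?_
  filter_upwards [eventually_ge_atTop 1] with n hn
  rw [hs.extrapolation n hn, add_sub_cancel_left]

theorem isBigO_one_extrapolation (hs : IsProxStage f g T u θ lam β α w z d y w')
    (hθ : Tendsto θ atTop (𝓝 0)) (hw : w =O[atTop] fun _ ↦ (1 : ℝ)) :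
    z =O[atTop] fun _ ↦ (1 : ℝ) := by
  simpa using ((hs.tendsto_extrapolation_sub hθ hw).isBigO_one ℝ).add hw

theorem isBigO_one_direction (hs : IsProxStage f g T u θ lam β α w z d y w')
    (hg : IsCocoercive L g) (hL : 0 < L) (hβ : Tendsto β atTop (𝓝 0))
    (hz : z =O[atTop] fun _ ↦ (1 : ℝ)) : d =O[atTop] fun _ ↦ (1 : ℝ) :=
  isBigO_one_of_succ_eq_add_smul (isBigO_one_comp_of_norm_sub_le (hg.norm_sub_le hL) hz).neg_left hβ
    ((eventually_ge_atTop 1).mono hs.direction)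

theorem tendsto_output_sub (hs : IsProxStage f g T u θ lam β α w z d y w')
    (hα : Tendsto α atTop (𝓝 0)) (hTy : (fun n ↦ T (y n)) =O[atTop] fun _ ↦ (1 : ℝ)) :
    Tendsto (fun n ↦ w' n - T (y n)) atTop (𝓝 0) := by
  refine (tendsto_zero_smul_of_isBigO_one hα
    ((isBigO_const_const u one_ne_zero _).sub hTy)).congr' ?_
  filter_upwards [eventually_ge_atTop 1] with n hn
  rw [hs.anchoring n hn]
  module

theorem isBigO_one_output (hs : IsProxStage f g T u θ lam β α w z d y w')
    (hα : Tendsto α atTop (𝓝 0)) (hTy : (fun n ↦ T (y n)) =O[atTop] fun _ ↦ (1 : ℝ)) :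
    w' =O[atTop] fun _ ↦ (1 : ℝ) := by
  simpa using ((hs.tendsto_output_sub hα hTy).isBigO_one ℝ).add hTy

theorem extrapolation_succ_sub (hs : IsProxStage f g T u θ lam β α w z d y w') {n : ℕ}
    (hn : 1 ≤ n) :
    z (n + 1) - z n =
      (w (n + 1) - w n) + (θ (n + 1) • (w (n + 1) - w n) - θ n • (w n - w (n - 1))) := by
  rw [hs.extrapolation n hn, hs.extrapolation (n + 1) (by omega), Nat.add_sub_cancel]
  module

theorem norm_prox_succ_sub_le (hs : IsProxStage f g T u θ lam β α w z d y w')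
    (hf : ConvexOn ℝ Set.univ f) (hg : IsCocoercive L g) (hlam : ∀ n, 0 < lam n) {n : ℕ}
    (hn : 1 ≤ n) (hlamL : lam (n + 1) ≤ 2 * L) :
    ‖y (n + 1) - y n‖ ≤ ‖w (n + 1) - w n‖ +
      (‖θ (n + 1) • (w (n + 1) - w n) - θ n • (w n - w (n - 1))‖ +
        ‖lam (n + 1) • (β (n + 1) • d (n + 1) - β n • d n)‖ +
        ‖(1 - lam (n + 1) / lam n) • (z n - y n)‖) := by
  have hprox := (hs.isProx n hn).norm_sub_le_of_add_smul hf (hlam n) (hlam (n + 1))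
    (hs.isProx (n + 1) (by omega))
  have hgrad := hg.norm_sub_sub_smul_le (hlam (n + 1)).le hlamL (z (n + 1)) (z n)
  have hsplit : (z (n + 1) - z n) + lam (n + 1) • (d (n + 1 + 1) - d (n + 1)) =
      ((z (n + 1) - z n) - lam (n + 1) • (g (z (n + 1)) - g (z n))) +
        lam (n + 1) • (β (n + 1) • d (n + 1) - β n • d n) := by
    linear_combination (norm := module)
      lam (n + 1) • hs.direction (n + 1) (by omega) - lam (n + 1) • hs.direction n hn
  rw [hsplit] at hprox
  have hinertia := norm_add_le (w (n + 1) - w n)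
    (θ (n + 1) • (w (n + 1) - w n) - θ n • (w n - w (n - 1)))
  rw [← hs.extrapolation_succ_sub hn] at hinertia
  linarith [norm_add_le ((z (n + 1) - z n) - lam (n + 1) • (g (z (n + 1)) - g (z n)))
    (lam (n + 1) • (β (n + 1) • d (n + 1) - β n • d n))]

theorem norm_output_succ_sub_le (hs : IsProxStage f g T u θ lam β α w z d y w')
    (hT : IsFirmlyNonexpansive T) {n : ℕ} (hn : 1 ≤ n) (hα : α (n + 1) ≤ 1) :
    ‖w' (n + 1) - w' n‖ ≤
      (1 - α (n + 1)) * ‖y (n + 1) - y n‖ + ‖(α (n + 1) - α n) • (u - T (y n))‖ := by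
  have hsplit : w' (n + 1) - w' n = (1 - α (n + 1)) • (T (y (n + 1)) - T (y n)) +
      (α (n + 1) - α n) • (u - T (y n)) := by
    rw [hs.anchoring n hn, hs.anchoring (n + 1) (by omega)]
    module
  have hα' : 0 ≤ 1 - α (n + 1) := sub_nonneg.2 hα
  rw [hsplit]
  refine (norm_add_le _ _).trans (add_le_add_left ?_ _)
  rw [norm_smul, Real.norm_of_nonneg hα']
  exact mul_le_mul_of_nonneg_left (hT.norm_sub_le _ _) hα'

theorem exists_isLittleO_norm_output_succ_sub_le
    (hs : IsProxStage f g T u θ lam β α w z d y w') (hP : AdmissibleParameters θ lam β α)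
    (hf : ConvexOn ℝ Set.univ f) (hg : IsCocoercive L g) (hL : 0 < L)
    (hT : IsFirmlyNonexpansive T) (hw : w =O[atTop] fun _ ↦ (1 : ℝ))
    (hy : y =O[atTop] fun _ ↦ (1 : ℝ)) :
    ∃ r : ℕ → ℝ, r =o[atTop] (fun n ↦ α (n + 1)) ∧ ∀ᶠ n in atTop,
      ‖w' (n + 1) - w' n‖ ≤ (1 - α (n + 1)) * ‖w (n + 1) - w n‖ + r n := by
  have hz := hs.isBigO_one_extrapolation (hP.tendsto_zero_of_isLittleO hP.θ_isLittleO) hw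
  have hd := hs.isBigO_one_direction hg hL (hP.tendsto_zero_of_isLittleO hP.β_isLittleO) hz
  have hTy := hT.isBigO_one_comp hy
  have hsucc := tendsto_add_atTop_nat 1
  have hinertia : (fun n ↦ θ (n + 1) • (w (n + 1) - w n) - θ n • (w n - w (n - 1)))
      =o[atTop] fun n ↦ α (n + 1) :=
    (isLittleO_smul_of_isBigO_one (hP.isLittleO_succ hP.θ_isLittleO)
      ((hw.comp_tendsto hsucc).sub hw)).sub
      (isLittleO_smul_of_isBigO_one hP.θ_isLittleO (isBigO_one_sub_pred hw))
  have hmomentum : (fun n ↦ lam (n + 1) • (β (n + 1) • d (n + 1) - β n • d n))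
      =o[atTop] fun n ↦ α (n + 1) := by
    simpa using ((hP.lam_tendsto_zero.comp hsucc).isBigO_one ℝ).smul_isLittleO
      ((isLittleO_smul_of_isBigO_one (hP.isLittleO_succ hP.β_isLittleO)
        (hd.comp_tendsto hsucc)).sub (isLittleO_smul_of_isBigO_one hP.β_isLittleO hd))
  have hrescale := isLittleO_smul_of_isBigO_one hP.lam_ratio_isLittleO (hz.sub hy)
  have hanchor := isLittleO_smul_of_isBigO_one hP.α_sub_isLittleO
    ((isBigO_const_const u one_ne_zero _).sub hTy)
  refine ⟨_, ((hinertia.norm_left.add hmomentum.norm_left).add hrescale.norm_left).add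
    hanchor.norm_left, ?_⟩
  filter_upwards [eventually_ge_atTop 1, (hP.lam_tendsto_zero.comp hsucc).eventually_le_const
    (mul_pos two_pos hL)] with n hn hlamL
  have hα := hP.α_mem_Icc (n + 1)
  have hstep := hs.norm_prox_succ_sub_le hf hg hP.lam_pos hn hlamL
  have hcontract := mul_le_mul_of_nonneg_left hstep (sub_nonneg.2 hα.2)
  have hout := hs.norm_output_succ_sub_le hT hn hα.2
  rw [mul_add] at hcontract
  refine (hout.trans (add_le_add_left hcontract _)).trans ?_
  rw [add_assoc]
  gcongr
  exact mul_le_of_le_one_left (by positivity) (sub_le_self 1 hα.1)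

theorem norm_output_sub_sq_add_le (hs : IsProxStage f g T u θ lam β α w z d y w')
    (hf : ConvexOn ℝ Set.univ f) (hT : IsFirmlyNonexpansive T) (hp : T p = p) {n : ℕ}
    (hn : 1 ≤ n) (hlam : 0 < lam n) (hα : α n ∈ Set.Icc 0 1) :
    ‖w' n - p‖ ^ 2 + (‖z n - y n‖ ^ 2 + ‖y n - T (y n)‖ ^ 2) ≤
      α n * ‖u - p‖ ^ 2 + ‖z n - p‖ ^ 2 +
        2 * lam n * (f p - f (y n) + ⟪d (n + 1), y n - p⟫_ℝ) := by
  have hanchor := norm_smul_add_smul_sub_sq_le hα u (T (y n)) p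
  rw [← hs.anchoring n hn] at hanchor
  have hconv := mul_le_of_le_one_left (sq_nonneg ‖T (y n) - p‖) (sub_le_self 1 hα.1)
  have hfix := hT.norm_sub_sq_add_le hp (y n)
  have hprox := (hs.isProx n hn).norm_sub_sq_le hf hlam p
  linarith

theorem exists_isBigO_one_sub_le (hs : IsProxStage f g T u θ lam β α w z d y w')
    (hlam : 0 ≤ lam 1) (hy : y =O[atTop] fun _ ↦ (1 : ℝ)) :
    ∃ b : ℕ → ℝ, b =O[atTop] (fun _ ↦ (1 : ℝ)) ∧ ∀ n, f p - f (y n) ≤ b n := by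
  let a := z 1 + lam 1 • d 2
  have hconst : ∀ c : ℝ, (fun _ ↦ c) =O[atTop] fun _ : ℕ ↦ (1 : ℝ) :=
    fun c ↦ isBigO_const_const c one_ne_zero _
  have hdist : (fun n ↦ ‖a - y n‖) =O[atTop] fun _ ↦ (1 : ℝ) :=
    ((isBigO_const_const a one_ne_zero _).sub hy).norm_left
  refine ⟨fun n ↦ f p - f (y 1) + 1 / (2 * lam 1) * ‖a - y n‖ ^ 2,
    (hconst _).add (by simpa only [one_pow] using (hdist.pow 2).const_mul_left _), fun n ↦ ?_⟩
  linarith [(hs.isProx 1 le_rfl).sub_mul_norm_sq_le hlam (y n)]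

theorem exists_tendsto_zero_norm_output_sub_sq_add_le
    (hs : IsProxStage f g T u θ lam β α w z d y w') (hP : AdmissibleParameters θ lam β α)
    (hf : ConvexOn ℝ Set.univ f) (hg : IsCocoercive L g) (hL : 0 < L)
    (hT : IsFirmlyNonexpansive T) (hp : T p = p) (hw : w =O[atTop] fun _ ↦ (1 : ℝ))
    (hy : y =O[atTop] fun _ ↦ (1 : ℝ)) :
    ∃ e : ℕ → ℝ, Tendsto e atTop (𝓝 0) ∧ ∀ᶠ n in atTop,
      ‖w' n - p‖ ^ 2 + (‖z n - y n‖ ^ 2 + ‖y n - T (y n)‖ ^ 2) ≤ ‖w n - p‖ ^ 2 + e n := by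
  have hθ := hP.tendsto_zero_of_isLittleO hP.θ_isLittleO
  have hz := hs.isBigO_one_extrapolation hθ hw
  have hd := hs.isBigO_one_direction hg hL (hP.tendsto_zero_of_isLittleO hP.β_isLittleO) hz
  have hp_bdd : (fun _ ↦ p) =O[atTop] fun _ : ℕ ↦ (1 : ℝ) := isBigO_const_const p one_ne_zero _
  have hextrapolation : Tendsto (fun n ↦ ‖z n - p‖ ^ 2 - ‖w n - p‖ ^ 2) atTop (𝓝 0) :=
    tendsto_norm_sq_sub_norm_sq (hz.sub hp_bdd) (hw.sub hp_bdd)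
      (by simpa using hs.tendsto_extrapolation_sub hθ hw)
  obtain ⟨b, hb, hfb⟩ := hs.exists_isBigO_one_sub_le (p := p) (hP.lam_pos 1).le hy
  have hinner : (fun n ↦ ⟪d (n + 1), y n - p⟫_ℝ) =O[atTop] fun _ ↦ (1 : ℝ) := by
    have hnorm := (hd.comp_tendsto (tendsto_add_atTop_nat 1)).norm_left.mul
      (hy.sub hp_bdd).norm_left
    simp only [Function.comp_apply, mul_one] at hnorm
    exact (IsBigO.of_norm_le fun n ↦ norm_inner_le_norm _ _).trans hnorm
  have hobjective : Tendsto (fun n ↦ lam n * (2 * (b n + ⟪d (n + 1), y n - p⟫_ℝ))) atTop (𝓝 0) :=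
    tendsto_zero_smul_of_isBigO_one hP.lam_tendsto_zero ((hb.add hinner).const_mul_left 2)
  refine ⟨fun n ↦ α n * ‖u - p‖ ^ 2 + (‖z n - p‖ ^ 2 - ‖w n - p‖ ^ 2) +
    lam n * (2 * (b n + ⟪d (n + 1), y n - p⟫_ℝ)), ?_, ?_⟩
  · simpa using ((hP.α_tendsto_zero.mul_const (‖u - p‖ ^ 2)).add hextrapolation).add hobjective
  · filter_upwards [eventually_ge_atTop 1] with n hn
    have hstep := hs.norm_output_sub_sq_add_le hf hT hp hn (hP.lam_pos n) (hP.α_mem_Icc n)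
    have := mul_le_mul_of_nonneg_left (hfb n) (hP.lam_pos n).le
    linarith

end IsProxStage

end Stage

section Cycle

variable {H : Type*} [NormedAddCommGroup H] [InnerProductSpace ℝ H]

/-- The algorithm as a cycle of `M` stages: stage `i` turns `w n i` into `w n (i + 1)`, and the
output `x (n + 1)` of the last stage enters the first stage of the next cycle. -/
structure IsProxCycle (M : ℕ) (f : ℕ → H → ℝ) (g T : ℕ → H → H) (u : ℕ → H) (θ lam β α : ℕ → ℝ)
    (x : ℕ → H) (w z d y : ℕ → ℕ → H) : Prop where
  stage : ∀ i ∈ Finset.Icc 1 M, IsProxStage (f i) (g i) (T i) (u i) θ lam β α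
    (fun n ↦ w n i) (fun n ↦ z n i) (fun n ↦ d n i) (fun n ↦ y n i) (fun n ↦ w n (i + 1))
  input : ∀ n ≥ 1, w n 1 = x n
  output : ∀ n ≥ 1, x (n + 1) = w n (M + 1)

namespace IsProxCycle

variable {M : ℕ} {f : ℕ → H → ℝ} {g T : ℕ → H → H} {u : ℕ → H} {θ lam β α L : ℕ → ℝ}
  {x : ℕ → H} {w z d y : ℕ → ℕ → H} {p : H}

theorem input_succ (hc : IsProxCycle M f g T u θ lam β α x w z d y) {n : ℕ} (hn : 1 ≤ n) :
    w (n + 1) 1 = w n (M + 1) :=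
  (hc.input (n + 1) (by omega)).trans (hc.output n hn)

theorem isBigO_one_input (hc : IsProxCycle M f g T u θ lam β α x w z d y)
    (hα : Tendsto α atTop (𝓝 0)) (hT : ∀ i ∈ Finset.Icc 1 M, IsFirmlyNonexpansive (T i))
    (hy : ∀ i ∈ Finset.Icc 1 M, (fun n ↦ y n i) =O[atTop] fun _ ↦ (1 : ℝ)) :
    ∀ i ∈ Finset.Icc 1 M, (fun n ↦ w n i) =O[atTop] fun _ ↦ (1 : ℝ) :=
  fun _ ↦ isBigO_one_of_cycle (fun _ ↦ hc.input_succ) fun i hi ↦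
    (hc.stage i hi).isBigO_one_output hα ((hT i hi).isBigO_one_comp (hy i hi))

theorem tendsto_displacement (hc : IsProxCycle M f g T u θ lam β α x w z d y) (hM : 1 ≤ M)
    (hP : AdmissibleParameters θ lam β α)
    (hf : ∀ i ∈ Finset.Icc 1 M, ConvexOn ℝ Set.univ (f i))
    (hL : ∀ i ∈ Finset.Icc 1 M, 0 < L i) (hg : ∀ i ∈ Finset.Icc 1 M, IsCocoercive (L i) (g i))
    (hT : ∀ i ∈ Finset.Icc 1 M, IsFirmlyNonexpansive (T i))
    (hy : ∀ i ∈ Finset.Icc 1 M, (fun n ↦ y n i) =O[atTop] fun _ ↦ (1 : ℝ)) :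
    Tendsto (fun n ↦ w (n + 1) 1 - w n 1) atTop (𝓝 0) :=
  have hw := hc.isBigO_one_input hP.α_tendsto_zero hT hy
  tendsto_cycle_displacement hM hP.α_mem_Icc hP.α_not_summable (fun _ ↦ hc.input_succ) fun i hi ↦
    (hc.stage i hi).exists_isLittleO_norm_output_succ_sub_le hP (hf i hi) (hg i hi) (hL i hi)
      (hT i hi) (hw i hi) (hy i hi)

theorem tendsto_residual (hc : IsProxCycle M f g T u θ lam β α x w z d y)
    (hP : AdmissibleParameters θ lam β α)
    (hf : ∀ i ∈ Finset.Icc 1 M, ConvexOn ℝ Set.univ (f i))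
    (hL : ∀ i ∈ Finset.Icc 1 M, 0 < L i) (hg : ∀ i ∈ Finset.Icc 1 M, IsCocoercive (L i) (g i))
    (hT : ∀ i ∈ Finset.Icc 1 M, IsFirmlyNonexpansive (T i))
    (hp : ∀ i ∈ Finset.Icc 1 M, T i p = p)
    (hy : ∀ i ∈ Finset.Icc 1 M, (fun n ↦ y n i) =O[atTop] fun _ ↦ (1 : ℝ)) {i : ℕ}
    (hi : i ∈ Finset.Icc 1 M) :
    Tendsto (fun n ↦ ‖z n i - y n i‖ ^ 2 + ‖y n i - T i (y n i)‖ ^ 2) atTop (𝓝 0) := by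
  have hM : 1 ≤ M := (Finset.mem_Icc.1 hi).1.trans (Finset.mem_Icc.1 hi).2
  have hw := hc.isBigO_one_input hP.α_tendsto_zero hT hy
  have hdist : (fun n ↦ w n 1 - p) =O[atTop] fun _ ↦ (1 : ℝ) :=
    (hw 1 (Finset.left_mem_Icc.2 hM)).sub (isBigO_const_const p one_ne_zero _)
  have hdecrease : Tendsto (fun n ↦ ‖w n 1 - p‖ ^ 2 - ‖w n (M + 1) - p‖ ^ 2) atTop (𝓝 0) := by
    have hdisp := (hc.tendsto_displacement hM hP hf hL hg hT hy).neg
    refine (tendsto_norm_sq_sub_norm_sq hdist (hdist.comp_tendsto (tendsto_add_atTop_nat 1))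
      (by simpa using hdisp)).congr' ?_
    filter_upwards [eventually_ge_atTop 1] with n hn
    rw [Function.comp_apply, hc.input_succ hn]
  exact tendsto_zero_of_cyclic_decrease (V := fun n i ↦ ‖w n i - p‖ ^ 2)
    (q := fun n i ↦ ‖z n i - y n i‖ ^ 2 + ‖y n i - T i (y n i)‖ ^ 2) (fun _ _ ↦ by positivity)
    (fun j hj ↦ (hc.stage j hj).exists_tendsto_zero_norm_output_sub_sq_add_le hP (hf j hj)
      (hg j hj) (hL j hj) (hT j hj) (hp j hj) (hw j hj) (hy j hj)) hdecrease hi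

theorem tendsto_input_sub_extrapolation (hc : IsProxCycle M f g T u θ lam β α x w z d y)
    (hP : AdmissibleParameters θ lam β α) (hT : ∀ i ∈ Finset.Icc 1 M, IsFirmlyNonexpansive (T i))
    (hy : ∀ i ∈ Finset.Icc 1 M, (fun n ↦ y n i) =O[atTop] fun _ ↦ (1 : ℝ)) :
    ∀ i ∈ Finset.Icc 1 M, Tendsto (fun n ↦ w n i - z n i) atTop (𝓝 0) := by
  intro i hi
  have hθ := hP.tendsto_zero_of_isLittleO hP.θ_isLittleO
  have hw := hc.isBigO_one_input hP.α_tendsto_zero hT hy i hi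
  simpa using ((hc.stage i hi).tendsto_extrapolation_sub hθ hw).neg

theorem tendsto_iterate_sub_input (hc : IsProxCycle M f g T u θ lam β α x w z d y)
    (hP : AdmissibleParameters θ lam β α) (hT : ∀ i ∈ Finset.Icc 1 M, IsFirmlyNonexpansive (T i))
    (hy : ∀ i ∈ Finset.Icc 1 M, (fun n ↦ y n i) =O[atTop] fun _ ↦ (1 : ℝ))
    (hzy : ∀ i ∈ Finset.Icc 1 M, Tendsto (fun n ↦ z n i - y n i) atTop (𝓝 0))
    (hyT : ∀ i ∈ Finset.Icc 1 M, Tendsto (fun n ↦ y n i - T i (y n i)) atTop (𝓝 0)) :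
    ∀ i ∈ Finset.Icc 1 M, Tendsto (fun n ↦ x n - w n i) atTop (𝓝 0) := by
  have hstage : ∀ i ∈ Finset.Icc 1 M, Tendsto (fun n ↦ w n i - w n (i + 1)) atTop (𝓝 0) := by
    intro i hi
    have hwz := hc.tendsto_input_sub_extrapolation hP hT hy i hi
    have hout := (hc.stage i hi).tendsto_output_sub hP.α_tendsto_zero
      ((hT i hi).isBigO_one_comp (hy i hi))
    simpa using ((hwz.add (hzy i hi)).add (hyT i hi)).sub hout
  intro i hi
  refine (tendsto_sub_of_cycle hstage hi).congr' ?_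
  filter_upwards [eventually_ge_atTop 1] with n hn
  rw [hc.input n hn]

end IsProxCycle

end Cycle

theorem alg1_xz_and_Tx_tendsto_zero_general {H : Type*} [NormedAddCommGroup H]
    [InnerProductSpace ℝ H] {M : ℕ} {f : ℕ → H → ℝ} {g T : ℕ → H → H} {u : ℕ → H}
    {θ lam β α L : ℕ → ℝ} {x : ℕ → H} {w z d y : ℕ → ℕ → H}
    (hc : IsProxCycle M f g T u θ lam β α x w z d y) (hP : AdmissibleParameters θ lam β α)
    (hf : ∀ i ∈ Finset.Icc 1 M, ConvexOn ℝ Set.univ (f i))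
    (hL : ∀ i ∈ Finset.Icc 1 M, 0 < L i) (hg : ∀ i ∈ Finset.Icc 1 M, IsCocoercive (L i) (g i))
    (hT : ∀ i ∈ Finset.Icc 1 M, IsFirmlyNonexpansive (T i))
    (hfix : (⋂ i ∈ Finset.Icc 1 M, {p : H | T i p = p}).Nonempty)
    (hy_bdd : ∀ i ∈ Finset.Icc 1 M, ∃ C, ∀ n ≥ 1, ‖y n i‖ ≤ C) :
    ∀ i ∈ Finset.Icc 1 M, Tendsto (fun n ↦ ‖x n - z n i‖) atTop (𝓝 0) ∧
      Tendsto (fun n ↦ ‖T i (x n) - x n‖) atTop (𝓝 0) := by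
  obtain ⟨p, hp⟩ := hfix
  have hTp : ∀ i ∈ Finset.Icc 1 M, T i p = p := by simpa using hp
  have hy := fun i hi ↦ isBigO_one_of_norm_le (hy_bdd i hi)
  have hzy : ∀ i ∈ Finset.Icc 1 M, Tendsto (fun n ↦ z n i - y n i) atTop (𝓝 0) := fun i hi ↦
    tendsto_zero_of_norm_sq_le (hc.tendsto_residual hP hf hL hg hT hTp hy hi)
      fun n ↦ le_add_of_nonneg_right (sq_nonneg _)
  have hyT : ∀ i ∈ Finset.Icc 1 M, Tendsto (fun n ↦ y n i - T i (y n i)) atTop (𝓝 0) :=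
    fun i hi ↦ tendsto_zero_of_norm_sq_le (hc.tendsto_residual hP hf hL hg hT hTp hy hi)
      fun n ↦ le_add_of_nonneg_left (sq_nonneg _)
  intro i hi
  have hxz : Tendsto (fun n ↦ x n - z n i) atTop (𝓝 0) := by
    simpa using (hc.tendsto_iterate_sub_input hP hT hy hzy hyT i hi).add
      (hc.tendsto_input_sub_extrapolation hP hT hy i hi)
  have hxy : Tendsto (fun n ↦ x n - y n i) atTop (𝓝 0) := by simpa using hxz.add (hzy i hi)
  refine ⟨tendsto_zero_iff_norm_tendsto_zero.1 hxz, squeeze_zero (fun _ ↦ norm_nonneg _)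
    (fun n ↦ (hT i hi).norm_apply_sub_le (x n) (y n i)) ?_⟩
  simpa using (hxy.norm.const_mul 2).add (hyT i hi).norm

theorem alg1_xz_and_Tx_tendsto_zero
    {H : Type*} [NormedAddCommGroup H] [InnerProductSpace ℝ H] [CompleteSpace H]
    (M : ℕ) (hM : 1 ≤ M)
    (f h : ℕ → H → ℝ) (h' : ℕ → H → H) (L : ℕ → ℝ) (T : ℕ → H → H)
    (hf_cont : ∀ i ∈ Finset.Icc 1 M, Continuous (f i))
    (hf_conv : ∀ i ∈ Finset.Icc 1 M, ConvexOn ℝ Set.univ (f i))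
    (hh_conv : ∀ i ∈ Finset.Icc 1 M, ConvexOn ℝ Set.univ (h i))
    (hh_grad : ∀ i ∈ Finset.Icc 1 M, ∀ x : H, HasGradientAt (h i) (h' i x) x)
    (hL_pos : ∀ i ∈ Finset.Icc 1 M, 0 < L i)
    (hh_lip : ∀ i ∈ Finset.Icc 1 M, ∀ x y : H, ‖h' i x - h' i y‖ ≤ (1 / L i) * ‖x - y‖)
    (hT_firm : ∀ i ∈ Finset.Icc 1 M, ∀ x y : H,
      ‖T i x - T i y‖ ^ 2 ≤ @inner ℝ H _ (T i x - T i y) (x - y))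
    (S : Set H) (hS : S = ⋂ i ∈ Finset.Icc 1 M, {x : H | T i x = x}) (hS_ne : S.Nonempty)
    (θ lam β α : ℕ → ℝ) (σ : ℝ) (hσ : 1 ≤ σ)
    (hθ_range : ∀ n, 0 ≤ θ n ∧ θ n < 1)
    (hlam_pos : ∀ n, 0 < lam n)
    (hlam_le : ∀ n, ∀ i ∈ Finset.Icc 1 M, lam n ≤ 2 * L i)
    (hβ_range : ∀ n, 0 < β n ∧ β n ≤ 1)
    (hα_range : ∀ n, 0 < α n ∧ α n ≤ 1)
    (hθ_anti : Antitone θ) (hlam_anti : Antitone lam)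
    (hβ_anti : Antitone β) (hα_anti : Antitone α)
    (hθ_lim : Tendsto θ atTop (𝓝 0)) (hlam_lim : Tendsto lam atTop (𝓝 0))
    (hβ_lim : Tendsto β atTop (𝓝 0)) (hα_lim : Tendsto α atTop (𝓝 0))
    (hC1 : ¬ Summable α)
    (hC2 : Tendsto (fun n => (1 / α (n+1)) * |1 / lam (n+1) - 1 / lam n|) atTop (𝓝 0))
    (hC3 : Tendsto (fun n => (1 / lam (n+1)) * |1 - α n / α (n+1)|) atTop (𝓝 0))
    (hC4 : Tendsto (fun n => α n / lam n) atTop (𝓝 0))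
    (hC5 : Tendsto (fun n => θ n / (α (n+1) * lam (n+1))) atTop (𝓝 0))
    (hC6 : ∀ n, lam n / lam (n+1) ≤ σ)
    (hC7 : Tendsto (fun n => β n / α (n+1)) atTop (𝓝 0))
    (x : ℕ → H) (w z y d : ℕ → ℕ → H) (u : ℕ → H)
    (hd1 : ∀ i ∈ Finset.Icc 1 M, d 1 i = -(h' i (z 0 i)))
    (hw1 : ∀ n ≥ 1, w n 1 = x n)
    (hz : ∀ n ≥ 1, ∀ i ∈ Finset.Icc 1 M, z n i = w n i + θ n • (w n i - w (n-1) i))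
    (hd : ∀ n ≥ 1, ∀ i ∈ Finset.Icc 1 M, d (n+1) i = -(h' i (z n i)) + β n • d n i)
    (hy : ∀ n ≥ 1, ∀ i ∈ Finset.Icc 1 M, ∀ v : H,
      f i (y n i) + (1 / (2 * lam n)) * ‖z n i + lam n • d (n+1) i - y n i‖ ^ 2
        ≤ f i v + (1 / (2 * lam n)) * ‖z n i + lam n • d (n+1) i - v‖ ^ 2)
    (hw : ∀ n ≥ 1, ∀ i ∈ Finset.Icc 1 M,
      w n (i+1) = α n • u i + (1 - α n) • T i (y n i))
    (hx : ∀ n ≥ 1, x (n+1) = w n (M+1))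
    (hy_bdd : ∀ i ∈ Finset.Icc 1 M, ∃ C, ∀ n ≥ 1, ‖y n i‖ ≤ C)
    : ∀ i ∈ Finset.Icc 1 M,
      Tendsto (fun n => ‖x n - z n i‖) atTop (𝓝 0) ∧
      Tendsto (fun n => ‖T i (x n) - x n‖) atTop (𝓝 0) :=
  alg1_xz_and_Tx_tendsto_zero_general
    { stage := fun i hi ↦ ⟨fun n hn ↦ hz n hn i hi, fun n hn ↦ hd n hn i hi,
        fun n hn ↦ hy n hn i hi, fun n hn ↦ hw n hn i hi⟩
      input := hw1
      output := hx }
    (.of_tendsto hlam_pos hα_range hlam_lim hα_lim hC1 hC2 hC3 hC5 hC7) hf_conv hL_pos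
    (fun i hi ↦ isCocoercive_of_lipschitz_gradient (hL_pos i hi) (hh_conv i hi) (hh_grad i hi)
      (hh_lip i hi))
    hT_firm (hS ▸ hS_ne) hy_bdd
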